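/- Fix i₀ ∈ ι and assume H(Σ) is finite dimensional. The linear map from ker P̂ i₀ / ran Q̂ i₀ to H(Σ) induced by the canonical embedding of (E i₀)^m into Σ^m (families supported at i₀) is injective, and it is surjective if and only if ker P̂ i = ran Q̂ i for every i ∈ ι with i ≠ i₀. -/

import Mathlib

noncomputable section

open Submodule

variable {ι : Type*}

/-- The submodule of finitely supported families in a product of `ℂ`-modules. -/
def finSupp (F : ι → Type*) [∀ i, AddCommGroup (F i)] [∀ i, Module ℂ (F i)] :
    Submodule ℂ (∀ i, F i) where
  carrier := {a | {i | a i ≠ 0}.Finite}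
  zero_mem' := by
    simp
  add_mem' := by
    intro a b ha hb
    refine (ha.union hb).subset fun i hi => ?_
    simp only [Set.mem_setOf_eq, Set.mem_union] at hi ⊢
    by_contra h
    push_neg at h
    exact hi (by simp [h.1, h.2])
  smul_mem' := by
    intro c a ha
    refine ha.subset fun i hi => ?_
    simp only [Set.mem_setOf_eq] at hi ⊢
    intro h
    exact hi (by simp [h])

/-- The componentwise linear map induced by a family of linear maps. -/
def pwMap {F G : ι → Type*} [∀ i, AddCommGroup (F i)] [∀ i, Module ℂ (F i)]
    [∀ i, AddCommGroup (G i)] [∀ i, Module ℂ (G i)]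
    (T : ∀ i, F i →ₗ[ℂ] G i) : (∀ i, F i) →ₗ[ℂ] (∀ i, G i) where
  toFun u i := T i (u i)
  map_add' u v := by funext i; simp
  map_smul' c u := by funext i; simp

@[simp] theorem pwMap_apply {F G : ι → Type*} [∀ i, AddCommGroup (F i)] [∀ i, Module ℂ (F i)]
    [∀ i, AddCommGroup (G i)] [∀ i, Module ℂ (G i)]
    (T : ∀ i, F i →ₗ[ℂ] G i) (u : ∀ i, F i) (i : ι) : pwMap T u i = T i (u i) := rfl

/-- The `k`-th power `V^k` of a subspace `V ⊆ Π`, inside `∏ i, (E i)^k`. -/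
def Vpow {E : ι → Type*} [∀ i, AddCommGroup (E i)] [∀ i, Module ℂ (E i)]
    (V : Submodule ℂ (∀ i, E i)) (k : ℕ) : Submodule ℂ (∀ i, Fin k → E i) where
  carrier := {u | ∀ j : Fin k, (fun i => u i j) ∈ V}
  zero_mem' := fun _ => V.zero_mem
  add_mem' := fun ha hb j => V.add_mem (ha j) (hb j)
  smul_mem' := fun c _a ha j => V.smul_mem c (ha j)

theorem Vpow_mono {E : ι → Type*} [∀ i, AddCommGroup (E i)] [∀ i, Module ℂ (E i)]
    {V W : Submodule ℂ (∀ i, E i)} (h : V ≤ W) (k : ℕ) : Vpow V k ≤ Vpow W k :=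
  fun _ hu j => h (hu j)

section Coh

variable {E : ι → Type*} [∀ i, AddCommGroup (E i)] [∀ i, Module ℂ (E i)] {r m n : ℕ}

/-- The local cohomology space `ker P̂ i / ran Q̂ i`. -/
abbrev locCoh (Qh : ∀ i, (Fin r → E i) →ₗ[ℂ] (Fin m → E i))
    (Ph : ∀ i, (Fin m → E i) →ₗ[ℂ] (Fin n → E i)) (i : ι) : Type _ :=
  ↥(LinearMap.ker (Ph i)) ⧸
    ((LinearMap.range (Qh i)).comap (LinearMap.ker (Ph i)).subtype)

/-- `ker (P : V^m → V^n)` as a submodule of `Π^m`. -/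
abbrev cohKer (Ph : ∀ i, (Fin m → E i) →ₗ[ℂ] (Fin n → E i))
    (V : Submodule ℂ (∀ i, E i)) : Submodule ℂ (∀ i, Fin m → E i) :=
  Vpow V m ⊓ LinearMap.ker (pwMap Ph)

/-- `ran (Q : V^r → V^m)` as a submodule of `Π^m`. -/
abbrev cohRan (Qh : ∀ i, (Fin r → E i) →ₗ[ℂ] (Fin m → E i))
    (V : Submodule ℂ (∀ i, E i)) : Submodule ℂ (∀ i, Fin m → E i) :=
  (Vpow V r).map (pwMap Qh)

/-- The cohomology `H(V) = ker (P : V^m → V^n) / ran (Q : V^r → V^m)`. -/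
abbrev coh (Qh : ∀ i, (Fin r → E i) →ₗ[ℂ] (Fin m → E i))
    (Ph : ∀ i, (Fin m → E i) →ₗ[ℂ] (Fin n → E i))
    (V : Submodule ℂ (∀ i, E i)) : Type _ :=
  ↥(cohKer Ph V) ⧸ ((cohRan Qh V).comap (cohKer Ph V).subtype)

theorem kerMem (Ph : ∀ i, (Fin m → E i) →ₗ[ℂ] (Fin n → E i))
    {V : Submodule ℂ (∀ i, E i)} (a : ↥(cohKer Ph V)) (i : ι) :
    (a : ∀ j, Fin m → E j) i ∈ LinearMap.ker (Ph i) := by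
  have h : pwMap Ph (a : ∀ j, Fin m → E j) = 0 :=
    LinearMap.mem_ker.mp (Submodule.mem_inf.mp a.2).2
  exact LinearMap.mem_ker.mpr (by simpa using congrFun h i)

/-- The map `H(V) → H(W)` induced by an inclusion `V ⊆ W`. -/
def cohMap (Qh : ∀ i, (Fin r → E i) →ₗ[ℂ] (Fin m → E i))
    (Ph : ∀ i, (Fin m → E i) →ₗ[ℂ] (Fin n → E i))
    {V W : Submodule ℂ (∀ i, E i)} (h : V ≤ W) :
    coh Qh Ph V →ₗ[ℂ] coh Qh Ph W :=
  Submodule.mapQ _ _ (Submodule.inclusion (inf_le_inf_right _ (Vpow_mono h m)))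
    (by
      intro x hx
      simp only [Submodule.mem_comap] at hx ⊢
      exact Submodule.map_mono (Vpow_mono h r) hx)

end Coh

section Emb

variable {ι : Type*} [DecidableEq ι] {E : ι → Type*}
  [∀ i, AddCommGroup (E i)] [∀ i, Module ℂ (E i)] {r m n : ℕ}

/-- The canonical embedding of `ker P̂ i₀` into `ker (P : Σ^m → Σ^n)`,
given by families supported at the single index `i₀`. -/
def embK (Ph : ∀ i, (Fin m → E i) →ₗ[ℂ] (Fin n → E i)) (i₀ : ι)
    (x : ↥(LinearMap.ker (Ph i₀))) : ↥(cohKer Ph (finSupp E)) :=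
  ⟨Pi.single i₀ (x : Fin m → E i₀), Submodule.mem_inf.mpr ⟨by
      intro j
      show {i | (Pi.single i₀ (x : Fin m → E i₀) : ∀ i, Fin m → E i) i j ≠ 0}.Finite
      refine (Set.finite_singleton i₀).subset fun i hi => ?_
      simp only [Set.mem_setOf_eq] at hi
      simp only [Set.mem_singleton_iff]
      by_contra hne
      exact hi (by simp [Pi.single_eq_of_ne hne]),
    LinearMap.mem_ker.mpr (by
      funext i
      by_cases hi : i = i₀
      · subst hi
        simp [LinearMap.mem_ker.mp x.2]
      · simp [Pi.single_eq_of_ne hi])⟩⟩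

end Emb

/-!
Finitely supported cohomology behaves like the direct sum of the local cohomologies: a preimage
under `Q` can be chosen to vanish wherever the given family does, so a class in `H(Σ)` is zero as
soon as each of its components is. The components of a class coming from the index `i₀` are the
class itself at `i₀` and zero elsewhere, so the inclusion of the summand at `i₀` is injective, and
it is onto exactly when all other summands are trivial.
-/

section PointwiseMap

variable {F G : ι → Type*} [∀ i, AddCommGroup (F i)] [∀ i, Module ℂ (F i)]
  [∀ i, AddCommGroup (G i)] [∀ i, Module ℂ (G i)]

theorem map_pwMap_le_pi_range (T : ∀ i, F i →ₗ[ℂ] G i) (V : Submodule ℂ (∀ i, F i)) :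
    V.map (pwMap T) ≤ Submodule.pi Set.univ fun i => LinearMap.range (T i) := by
  rintro _ ⟨w, -, rfl⟩ i -
  exact ⟨w i, rfl⟩

theorem map_pwMap_finSupp_le (T : ∀ i, F i →ₗ[ℂ] G i) :
    (finSupp F).map (pwMap T) ≤ finSupp G := by
  rintro _ ⟨w, hw, rfl⟩
  exact Set.Finite.subset hw fun i hi hwi => hi (by rw [pwMap_apply, hwi, map_zero])

theorem map_pwMap_finSupp (T : ∀ i, F i →ₗ[ℂ] G i) :
    (finSupp F).map (pwMap T) =
      finSupp G ⊓ Submodule.pi Set.univ fun i => LinearMap.range (T i) := by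
  refine le_antisymm (le_inf (map_pwMap_finSupp_le T) (map_pwMap_le_pi_range T _)) ?_
  rintro u ⟨hu, hrange⟩
  -- Choosing the preimage `0` wherever `u` vanishes keeps the support finite.
  have hpre : ∀ i, ∃ x, T i x = u i ∧ (u i = 0 → x = 0) := fun i => by
    by_cases hui : u i = 0
    · exact ⟨0, by rw [map_zero, hui], fun _ => rfl⟩
    · obtain ⟨x, hx⟩ := hrange i (Set.mem_univ i)
      exact ⟨x, hx, fun h => absurd h hui⟩
  choose w hw hw_zero using hpre
  exact ⟨w, Set.Finite.subset hu fun i hwi hui => hwi (hw_zero i hui), funext hw⟩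

end PointwiseMap

section Cohomology

variable {E : ι → Type*} [∀ i, AddCommGroup (E i)] [∀ i, Module ℂ (E i)] {r m n : ℕ}

theorem Vpow_finSupp (k : ℕ) : Vpow (finSupp E) k = finSupp fun i => Fin k → E i := by
  ext u
  have hsupp : {i | u i ≠ 0} = ⋃ j : Fin k, {i | u i j ≠ 0} := by
    ext i
    simp only [Set.mem_ofPred_eq, Set.mem_iUnion, Function.ne_iff, Pi.zero_apply]
  change (∀ j, {i | u i j ≠ 0}.Finite) ↔ {i | u i ≠ 0}.Finite
  rw [hsupp]
  exact ⟨Set.finite_iUnion, fun h j => h.subset (Set.subset_iUnion (fun j => {i | u i j ≠ 0}) j)⟩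

theorem cohRan_finSupp (Qh : ∀ i, (Fin r → E i) →ₗ[ℂ] (Fin m → E i)) :
    cohRan Qh (finSupp E) =
      Vpow (finSupp E) m ⊓ Submodule.pi Set.univ fun i => LinearMap.range (Qh i) := by
  rw [cohRan, Vpow_finSupp, Vpow_finSupp, map_pwMap_finSupp]

variable (Qh : ∀ i, (Fin r → E i) →ₗ[ℂ] (Fin m → E i))
  (Ph : ∀ i, (Fin m → E i) →ₗ[ℂ] (Fin n → E i))

theorem subsingleton_locCoh_iff (i : ι) :
    Subsingleton (locCoh Qh Ph i) ↔ LinearMap.ker (Ph i) ≤ LinearMap.range (Qh i) := by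
  rw [Submodule.Quotient.subsingleton_iff, Submodule.comap_subtype_eq_top]

/-- The component map `H(V) → ker P̂ i / ran Q̂ i`, sending the class of `a` to the class of `a i`.
On `H(Σ)` these maps detect vanishing and provide retractions of the maps `cohSingle`. -/
def cohProj (V : Submodule ℂ (∀ i, E i)) (i : ι) : coh Qh Ph V →ₗ[ℂ] locCoh Qh Ph i :=
  Submodule.mapQ _ _
    ((LinearMap.proj i ∘ₗ (cohKer Ph V).subtype).codRestrict _ fun a => kerMem Ph a i)
    fun _ ha => map_pwMap_le_pi_range Qh _ ha i (Set.mem_univ i)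

theorem cohProj_mk (V : Submodule ℂ (∀ i, E i)) (i : ι) (a : cohKer Ph V) :
    cohProj Qh Ph V i (Submodule.Quotient.mk a) =
      Submodule.Quotient.mk ⟨(a : ∀ i, Fin m → E i) i, kerMem Ph a i⟩ :=
  rfl

theorem cohProj_mk_eq_zero_iff (V : Submodule ℂ (∀ i, E i)) (i : ι) (a : cohKer Ph V) :
    cohProj Qh Ph V i (Submodule.Quotient.mk a) = 0 ↔
      (a : ∀ i, Fin m → E i) i ∈ LinearMap.range (Qh i) := by
  rw [cohProj_mk, Submodule.Quotient.mk_eq_zero, Submodule.mem_comap, Submodule.subtype_apply]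

variable {Qh Ph} in
theorem eq_zero_of_forall_cohProj_eq_zero {y : coh Qh Ph (finSupp E)}
    (hy : ∀ i, cohProj Qh Ph (finSupp E) i y = 0) : y = 0 := by
  obtain ⟨a, rfl⟩ := Submodule.Quotient.mk_surjective _ y
  rw [Submodule.Quotient.mk_eq_zero, Submodule.mem_comap, cohRan_finSupp]
  exact ⟨a.2.1, fun i _ => (cohProj_mk_eq_zero_iff Qh Ph _ i a).mp (hy i)⟩

variable {Qh Ph} in
theorem coh_finSupp_ext {y z : coh Qh Ph (finSupp E)}
    (h : ∀ i, cohProj Qh Ph (finSupp E) i y = cohProj Qh Ph (finSupp E) i z) : y = z :=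
  sub_eq_zero.mp <| eq_zero_of_forall_cohProj_eq_zero fun i => by rw [map_sub, h i, sub_self]

variable [DecidableEq ι]

theorem embK_apply_self (i : ι) (x : LinearMap.ker (Ph i)) :
    (embK Ph i x : ∀ j, Fin m → E j) i = x :=
  Pi.single_eq_same (M := fun j => Fin m → E j) i x.1

variable {Ph} in
theorem embK_apply_of_ne {i j : ι} (hij : i ≠ j) (x : LinearMap.ker (Ph j)) :
    (embK Ph j x : ∀ i, Fin m → E i) i = 0 :=
  Pi.single_eq_of_ne (M := fun i => Fin m → E i) hij x.1

/-- `embK` as a linear map. -/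
def embKHom (i : ι) : LinearMap.ker (Ph i) →ₗ[ℂ] cohKer Ph (finSupp E) where
  toFun := embK Ph i
  map_add' x y := Subtype.ext (Pi.single_add (f := fun i => Fin m → E i) i x.1 y.1)
  map_smul' c x := Subtype.ext (Pi.single_smul (f := fun i => Fin m → E i) i c x.1)

theorem embK_mem_cohRan (i : ι) {x : LinearMap.ker (Ph i)}
    (hx : (x : Fin m → E i) ∈ LinearMap.range (Qh i)) :
    (embK Ph i x : ∀ i, Fin m → E i) ∈ cohRan Qh (finSupp E) := by
  rw [cohRan_finSupp]
  exact ⟨(embK Ph i x).2.1, Submodule.le_comap_single_pi (fun i => LinearMap.range (Qh i)) hx⟩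

/-- The map `ker P̂ i / ran Q̂ i → H(Σ)` induced by the embedding `embK` of families supported
at `i`. -/
def cohSingle (i : ι) : locCoh Qh Ph i →ₗ[ℂ] coh Qh Ph (finSupp E) :=
  Submodule.mapQ _ _ (embKHom Ph i) fun _ hx => embK_mem_cohRan Qh Ph i hx

theorem cohSingle_mk (i : ι) (x : LinearMap.ker (Ph i)) :
    cohSingle Qh Ph i (Submodule.Quotient.mk x) = Submodule.Quotient.mk (embK Ph i x) :=
  rfl

theorem cohProj_cohSingle_self (i : ι) (z : locCoh Qh Ph i) :
    cohProj Qh Ph (finSupp E) i (cohSingle Qh Ph i z) = z := by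
  obtain ⟨x, rfl⟩ := Submodule.Quotient.mk_surjective _ z
  simp only [cohSingle_mk, cohProj_mk, embK_apply_self]

variable {Qh Ph} in
theorem cohProj_cohSingle_of_ne {i j : ι} (hij : i ≠ j) (z : locCoh Qh Ph j) :
    cohProj Qh Ph (finSupp E) i (cohSingle Qh Ph j z) = 0 := by
  obtain ⟨x, rfl⟩ := Submodule.Quotient.mk_surjective _ z
  rw [cohSingle_mk, cohProj_mk_eq_zero_iff, embK_apply_of_ne hij]
  exact zero_mem _

theorem cohSingle_injective (i : ι) : Function.Injective (cohSingle Qh Ph i) :=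
  Function.LeftInverse.injective (cohProj_cohSingle_self Qh Ph i)

theorem cohSingle_surjective_iff (i₀ : ι) :
    Function.Surjective (cohSingle Qh Ph i₀) ↔
      ∀ i, i ≠ i₀ → Subsingleton (locCoh Qh Ph i) := by
  constructor
  · refine fun hsurj i hi => subsingleton_of_forall_eq 0 fun z => ?_
    obtain ⟨y, hy⟩ := hsurj (cohSingle Qh Ph i z)
    rw [← cohProj_cohSingle_self Qh Ph i z, ← hy, cohProj_cohSingle_of_ne hi]
  · refine fun hsub y => ⟨cohProj Qh Ph (finSupp E) i₀ y, coh_finSupp_ext fun i => ?_⟩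
    obtain rfl | hi := eq_or_ne i i₀
    · exact cohProj_cohSingle_self Qh Ph i _
    · exact (hsub i hi).elim _ _

end Cohomology

theorem statement_19_general {ι : Type*} [DecidableEq ι] (E : ι → Type*)
    [∀ i, AddCommGroup (E i)] [∀ i, Module ℂ (E i)] (r m n : ℕ)
    (Qh : ∀ i, (Fin r → E i) →ₗ[ℂ] (Fin m → E i))
    (Ph : ∀ i, (Fin m → E i) →ₗ[ℂ] (Fin n → E i))
    (hPQ : ∀ i, (Ph i).comp (Qh i) = 0) (i₀ : ι) :
    ∃ f : locCoh Qh Ph i₀ →ₗ[ℂ] coh Qh Ph (finSupp E),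
      (∀ x : ↥(LinearMap.ker (Ph i₀)),
        f (Submodule.Quotient.mk x) = Submodule.Quotient.mk (embK Ph i₀ x)) ∧
      Function.Injective f ∧
      (Function.Surjective f ↔
        ∀ i, i ≠ i₀ → LinearMap.ker (Ph i) = LinearMap.range (Qh i)) := by
  have hexact (i : ι) : Subsingleton (locCoh Qh Ph i) ↔
      LinearMap.ker (Ph i) = LinearMap.range (Qh i) :=
    (subsingleton_locCoh_iff Qh Ph i).trans
      (LinearMap.range_le_ker_iff.mpr (hPQ i)).ge_iff_eq'
  refine ⟨cohSingle Qh Ph i₀, cohSingle_mk Qh Ph i₀, cohSingle_injective Qh Ph i₀, ?_⟩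
  simp only [cohSingle_surjective_iff, hexact]

theorem statement_19 {ι : Type*} [Countable ι] [DecidableEq ι] (E : ι → Type*)
    [∀ i, NormedAddCommGroup (E i)] [∀ i, InnerProductSpace ℂ (E i)]
    [∀ i, FiniteDimensional ℂ (E i)] (r m n : ℕ)
    (Qh : ∀ i, (Fin r → E i) →ₗ[ℂ] (Fin m → E i))
    (Ph : ∀ i, (Fin m → E i) →ₗ[ℂ] (Fin n → E i))
    (hPQ : ∀ i, (Ph i).comp (Qh i) = 0)
    (i₀ : ι) (hfin : FiniteDimensional ℂ (coh Qh Ph (finSupp E))) :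
    ∃ f : locCoh Qh Ph i₀ →ₗ[ℂ] coh Qh Ph (finSupp E),
      (∀ x : ↥(LinearMap.ker (Ph i₀)),
        f (Submodule.Quotient.mk x) = Submodule.Quotient.mk (embK Ph i₀ x)) ∧
      Function.Injective f ∧
      (Function.Surjective f ↔
        ∀ i, i ≠ i₀ → LinearMap.ker (Ph i) = LinearMap.range (Qh i)) :=
  statement_19_general E r m n Qh Ph hPQ i₀
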